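/- arXiv:2605.01590 — 2 statements merged into one kernel-verified Lean document; each statement's English description precedes it below -/
import Mathlib

section
/- The group L₊₁ presented by two generators a, t subject to the two defining relations (a·t)³ = a³ and [[t,a],t] = a³ is an infinite group and is not nilpotent. -/
/-- The commutator `[g,h] = g⁻¹h⁻¹gh`. -/
def fcomm {G : Type*} [Group G] (g h : G) : G := g⁻¹ * h⁻¹ * g * h

/-- The generator `a` of the free group on two generators. -/
def aF : FreeGroup (Fin 2) := FreeGroup.of 0

/-- The generator `t` of the free group on two generators. -/
def tF : FreeGroup (Fin 2) := FreeGroup.of 1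

/-- The relators of `L₊₁ = ⟨a, t ∣ (a·t)³ = a³, [[t,a],t] = a³⟩`:
`(a·t)³·(a³)⁻¹` and `[[t,a],t]·(a³)⁻¹`. -/
def LposRels : Set (FreeGroup (Fin 2)) :=
  {(aF * tF) ^ 3 * (aF ^ 3)⁻¹, fcomm (fcomm tF aF) tF * (aF ^ 3)⁻¹}

/-- The skeleton limit group `L₊₁` attached to the U-tree. -/
abbrev Lpos : Type := PresentedGroup LposRels

/-! Let `u` be a primitive cube root of unity in `ℂ`. The rotation `z ↦ u * z` and the translation
`z ↦ z + 1` satisfy the relations of `L₊₁`, both sides of each relation becoming trivial, so `L₊₁`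
acts on the plane through the orientation-preserving `(3, 3, 3)` triangle group `ℤ[u] ⋊ ℤ/3`.
The translation has infinite order. Taking its commutator with the rotation `n` times yields the
translation by `(1 - u) ^ n ≠ 0`, which would have to vanish for large `n` in a nilpotent group. -/

open scoped commutatorElement

section Commutators

variable {G : Type*} [Group G]

theorem iterate_commutator_mem_lowerCentralSeries (x g : G) (n : ℕ) :
    (⁅·, g⁆)^[n] x ∈ (⊤ : Subgroup G).lowerCentralSeries n := by
  induction n with
  | zero => exact Subgroup.mem_top x
  | succ n ih =>
    rw [Function.iterate_succ_apply']
    exact Subgroup.commutator_mem_commutator ih (Subgroup.mem_top g)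

theorem exists_iterate_commutator_eq_one [Group.IsNilpotent G] (x g : G) :
    ∃ n : ℕ, (⁅·, g⁆)^[n] x = 1 := by
  obtain ⟨n, hn⟩ := Subgroup.nilpotent_iff_lowerCentralSeries.mp ‹Group.IsNilpotent G›
  exact ⟨n, Subgroup.mem_bot.mp (hn ▸ iterate_commutator_mem_lowerCentralSeries x g n)⟩

theorem map_iterate_commutator {H : Type*} [Group H] (f : G →* H) (x g : G) (n : ℕ) :
    f ((⁅·, g⁆)^[n] x) = (⁅·, f g⁆)^[n] (f x) :=
  Function.Semiconj.iterate_right (fun y => map_commutatorElement f y g) n x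

theorem fcomm_eq_commutatorElement (g h : G) : fcomm g h = ⁅g⁻¹, h⁻¹⁆ := by
  simp only [fcomm, commutatorElement_def, inv_inv]

end Commutators

theorem addRight_injective (A : Type*) [AddGroup A] :
    Function.Injective (Equiv.addRight : A → Equiv.Perm A) := by
  intro b c h
  simpa using DFunLike.congr_fun h 0

theorem fcomm_addRight_addRight {A : Type*} [AddCommGroup A] (b c : A) :
    fcomm (Equiv.addRight b) (Equiv.addRight c) = 1 := by
  ext z
  simp [fcomm]

section AffineMaps

variable {R : Type*} [Ring R]

theorem commutator_addRight_mulLeft (b : R) (u : Rˣ) :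
    ⁅Equiv.addRight b, u.mulLeft⁆ = Equiv.addRight ((1 - u) * b) := by
  ext z
  change u * (↑u⁻¹ * z + -b) + b = z + (1 - u) * b
  rw [mul_add, Units.mul_inv_cancel_left]
  noncomm_ring

theorem iterate_commutator_addRight_mulLeft (b : R) (u : Rˣ) (n : ℕ) :
    (⁅·, u.mulLeft⁆)^[n] (Equiv.addRight b) = Equiv.addRight ((1 - u) ^ n * b) := by
  induction n with
  | zero => simp
  | succ n ih =>
    rw [Function.iterate_succ_apply', ih, commutator_addRight_mulLeft, pow_succ', mul_assoc]

theorem fcomm_addRight_mulLeft (b : R) (u : Rˣ) :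
    fcomm (Equiv.addRight b) u.mulLeft = Equiv.addRight ((1 - ↑u⁻¹) * -b) := by
  rw [fcomm_eq_commutatorElement, Equiv.neg_addRight]
  exact commutator_addRight_mulLeft (-b) u⁻¹

variable {u : Rˣ}

theorem mulLeft_mul_addRight_pow_three (hu : (u : R) ^ 2 + u + 1 = 0) (b : R) :
    (u.mulLeft * Equiv.addRight b) ^ 3 = 1 := by
  ext z
  calc u * (u * (u * (z + b) + b) + b)
      = ((u : R) ^ 2 + u + 1) * ((u - 1) * z + u * b) + z := by noncomm_ring
    _ = z := by rw [hu, zero_mul, zero_add]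

theorem mulLeft_pow_three (hu : (u : R) ^ 2 + u + 1 = 0) : u.mulLeft ^ 3 = 1 := by
  simpa using mulLeft_mul_addRight_pow_three hu 0

end AffineMaps

theorem exists_complex_unit_sq_add_self_add_one_eq_zero :
    ∃ u : ℂˣ, (u : ℂ) ^ 2 + u + 1 = 0 := by
  have hζ := Complex.isPrimitiveRoot_exp 3 three_ne_zero
  refine ⟨(hζ.isUnit three_ne_zero).unit, ?_⟩
  have hsum := hζ.geom_sum_eq_zero (by norm_num)
  simp only [Finset.sum_range_succ, Finset.sum_range_zero] at hsum
  rw [IsUnit.unit_spec]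
  linear_combination hsum

namespace Lpos

/-- The generator `a` of `L₊₁`. -/
def a : Lpos := PresentedGroup.of 0

/-- The generator `t` of `L₊₁`. -/
def t : Lpos := PresentedGroup.of 1

section Lift

variable {G : Type*} [Group G] {x y : G}

theorem lift_rels_eq_one (hxy : (x * y) ^ 3 = x ^ 3) (hcomm : fcomm (fcomm y x) y = x ^ 3) :
    ∀ r ∈ LposRels, FreeGroup.lift ![x, y] r = 1 := by
  rintro r (rfl | rfl)
  · simpa [aF, tF, mul_inv_eq_one] using hxy
  · simpa [aF, tF, fcomm, mul_inv_eq_one] using hcomm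

/-- The universal property of `L₊₁`: the homomorphism `a ↦ x`, `t ↦ y` determined by a pair of
elements satisfying the two relations. -/
def lift (hxy : (x * y) ^ 3 = x ^ 3) (hcomm : fcomm (fcomm y x) y = x ^ 3) : Lpos →* G :=
  PresentedGroup.toGroup (lift_rels_eq_one hxy hcomm)

theorem lift_a (hxy : (x * y) ^ 3 = x ^ 3) (hcomm : fcomm (fcomm y x) y = x ^ 3) :
    lift hxy hcomm a = x :=
  PresentedGroup.toGroup.of (lift_rels_eq_one hxy hcomm)

theorem lift_t (hxy : (x * y) ^ 3 = x ^ 3) (hcomm : fcomm (fcomm y x) y = x ^ 3) :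
    lift hxy hcomm t = y :=
  PresentedGroup.toGroup.of (lift_rels_eq_one hxy hcomm)

end Lift

section AffineAction

variable {R : Type*} [Ring R] {u : Rˣ}

/-- The action of `L₊₁` on a ring `R` by affine maps, in which `a` is multiplication by a root `u`
of `X ^ 2 + X + 1` and `t` is translation by `1`. -/
def affineHom (hu : (u : R) ^ 2 + u + 1 = 0) : Lpos →* Equiv.Perm R :=
  lift (x := u.mulLeft) (y := Equiv.addRight 1)
    (by rw [mulLeft_mul_addRight_pow_three hu, mulLeft_pow_three hu])
    (by rw [fcomm_addRight_mulLeft, fcomm_addRight_addRight, mulLeft_pow_three hu])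

theorem affineHom_a (hu : (u : R) ^ 2 + u + 1 = 0) : affineHom hu a = u.mulLeft := by
  rw [affineHom, lift_a]

theorem affineHom_t (hu : (u : R) ^ 2 + u + 1 = 0) : affineHom hu t = Equiv.addRight 1 := by
  rw [affineHom, lift_t]

theorem affineHom_t_pow (hu : (u : R) ^ 2 + u + 1 = 0) (n : ℕ) :
    affineHom hu (t ^ n) = Equiv.addRight (n : R) := by
  rw [map_pow, affineHom_t, Equiv.nsmul_addRight, nsmul_one]

theorem affineHom_iterate_commutator (hu : (u : R) ^ 2 + u + 1 = 0) (n : ℕ) :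
    affineHom hu ((⁅·, a⁆)^[n] t) = Equiv.addRight ((1 - u : R) ^ n) := by
  rw [map_iterate_commutator, affineHom_a, affineHom_t, iterate_commutator_addRight_mulLeft,
    mul_one]

end AffineAction

theorem t_pow_injective : Function.Injective (t ^ · : ℕ → Lpos) := by
  intro m n hmn
  obtain ⟨u, hu⟩ := exists_complex_unit_sq_add_self_add_one_eq_zero
  have htranslation : Equiv.addRight (m : ℂ) = Equiv.addRight (n : ℂ) := by
    simpa only [affineHom_t_pow] using congrArg (affineHom hu) hmn
  exact Nat.cast_injective (addRight_injective ℂ htranslation)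

theorem iterate_commutator_t_a_ne_one (n : ℕ) : (⁅·, a⁆)^[n] t ≠ 1 := by
  intro htriv
  obtain ⟨u, hu⟩ := exists_complex_unit_sq_add_self_add_one_eq_zero
  have hu_ne_one : (u : ℂ) ≠ 1 := by
    intro h
    norm_num [h] at hu
  have htranslation : Equiv.addRight ((1 - u : ℂ) ^ n) = Equiv.addRight 0 := by
    rw [← affineHom_iterate_commutator hu, htriv, map_one, Equiv.addRight_zero]
  exact pow_ne_zero n (sub_ne_zero.mpr hu_ne_one.symm) (addRight_injective ℂ htranslation)

end Lpos

theorem Lpos_infinite_and_not_nilpotent :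
    Infinite Lpos ∧ ¬ Group.IsNilpotent Lpos := by
  refine ⟨.of_injective _ Lpos.t_pow_injective, fun _ => ?_⟩
  obtain ⟨n, hn⟩ := exists_iterate_commutator_eq_one Lpos.t Lpos.a
  exact Lpos.iterate_commutator_t_a_ne_one n hn
end

section
/- Fix an odd integer c ≥ 5. Then the six groups G_Q(c, R_x, R_y), obtained from the six choices of relator words R_x ∈ {x³, x³·s_c⁻¹} and R_y ∈ {y³·s₃⁻²·s₄⁻¹, y³·s₃⁻²·s₄⁻¹·s_c⁻¹, y³·s₃⁻²·s₄⁻¹·s_c⁻²}, are pairwise non-isomorphic. -/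
namespace GQdef

/-- The generator `x` (as a word in the free group). -/
def xw : FreeGroup ℕ := FreeGroup.of 0

/-- The generator `y`. -/
def yw : FreeGroup ℕ := FreeGroup.of 1

/-- The generator `t₃`. -/
def t3w : FreeGroup ℕ := FreeGroup.of 2

/-- The generator `s_j` (meaningful for `2 ≤ j ≤ c`). -/
def sw (j : ℕ) : FreeGroup ℕ := FreeGroup.of (j + 1)

/-- The defining relators of `G_Q(c, R_x, R_y)`:
`s₂ = [y,x]`, `t₃ = [s₂,y]`, `s_j = [s_{j−1},x]` for `3 ≤ j ≤ c`,
`s_j³ = s_{j+2}²·s_{j+3}` for `2 ≤ j ≤ c−3`, `s_{c−2}³ = s_c²`, `t₃³ = 1`,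
`R_x = 1`, `R_y = 1`.  (The superfluous generators `FreeGroup.of n` with
`n ≥ c+2` are killed, so that the effective generators are exactly
`x, y, t₃, s₂, …, s_c`.) -/
def rels (c : ℕ) (Rx Ry : FreeGroup ℕ) : Set (FreeGroup ℕ) :=
  {sw 2 * (fcomm yw xw)⁻¹, t3w * (fcomm (sw 2) yw)⁻¹, t3w ^ 3,
    sw (c - 2) ^ 3 * (sw c ^ 2)⁻¹, Rx, Ry} ∪
  {w | ∃ j : ℕ, 3 ≤ j ∧ j ≤ c ∧ w = sw j * (fcomm (sw (j - 1)) xw)⁻¹} ∪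
  {w | ∃ j : ℕ, 2 ≤ j ∧ j ≤ c - 3 ∧ w = sw j ^ 3 * (sw (j + 2) ^ 2 * sw (j + 3))⁻¹} ∪
  {w | ∃ n : ℕ, c + 2 ≤ n ∧ w = FreeGroup.of n}

/-- The group `G_Q(c, R_x, R_y)`. -/
abbrev GQ (c : ℕ) (Rx Ry : FreeGroup ℕ) : Type := PresentedGroup (rels c Rx Ry)

/-- The two admissible relator words `R_x ∈ {x³, x³·s_c⁻¹}`. -/
def RxSet (c : ℕ) : Set (FreeGroup ℕ) := {xw ^ 3, xw ^ 3 * (sw c)⁻¹}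

/-- The three admissible relator words
`R_y ∈ {y³·s₃⁻²·s₄⁻¹, y³·s₃⁻²·s₄⁻¹·s_c⁻¹, y³·s₃⁻²·s₄⁻¹·s_c⁻²}`. -/
def RySet (c : ℕ) : Set (FreeGroup ℕ) :=
  {yw ^ 3 * (sw 3 ^ 2)⁻¹ * (sw 4)⁻¹,
   yw ^ 3 * (sw 3 ^ 2)⁻¹ * (sw 4)⁻¹ * (sw c)⁻¹,
   yw ^ 3 * (sw 3 ^ 2)⁻¹ * (sw 4)⁻¹ * (sw c ^ 2)⁻¹}

end GQdef

open GQdef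

/-!
Write `c = n + 1`, `R_x = x³ s_c⁻ᵃ` and `R_y = y³ s₃⁻² s₄⁻¹ s_c⁻ᵇ`. Two quotients of the group
suffice to recover `a` and `b`.

The first is an extension of `C₃ = ⟨x⟩` by the additive group of a quotient ring of `ℤ[X]` in
which `x` acts as `ζ = 1 + ϖ`, where `ϖⁿ⁺¹ = 0`. Then `s_j` is the vector `ϖʲ⁻¹`, and the
relations between the cubes of the `s_j` all say that `3 = 2 ϖ² + ϖ³` up to multiples of `ϖⁿ`.
Choosing `x³ = a ϖⁿ` and `1 + ζ + ζ² = b ϖⁿ`, that is `3 = 2 ϖ² + ϖ³ + b ϖⁿ`, realizes the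
relators `R_x` and `R_y`. The second is the wreath product `C₃ ≀ C₃`, with `x` in the base group
and `y` permuting the factors.

Let a homomorphism onto the group with exponents `a'` and `b'` map `x`, `y` to `u`, `v`. The
images of `u` and `v` in the abelianization `C₃ × C₃` are independent, and the relations satisfied
in the wreath product then force these images to be `xⁱ` and `yʷ` with `i, w ≠ 0`. In the first
quotient `s_c` goes to `iⁿ w ϖⁿ`, so comparing cubes gives `a' i = a iⁿ w` and `b' w = b iⁿ w`
modulo `3`. For odd `c` the exponent `n` is even, so `iⁿ = 1`; hence `b = b'`, and `a`, `a'`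
vanish together.
-/

section Commutators

variable {G H : Type*} [Group G] [Group H]

lemma mul_mul_fcomm (g h : G) : h * g * fcomm g h = g * h := by
  simp [fcomm, mul_assoc]

lemma map_fcomm (f : G →* H) (g h : G) : f (fcomm g h) = fcomm (f g) (f h) := by
  simp [fcomm]

/-- The left-normed commutator `[y, x, …, x]` with `n` entries `x`; the paper's `s_j` is
`engel x y (j - 1)`. -/
def engel (x y : G) : ℕ → G
  | 0 => y
  | n + 1 => fcomm (engel x y n) x

lemma engel_succ_eq_engel_fcomm (x y : G) (n : ℕ) :
    engel x y (n + 1) = engel x (fcomm y x) n := by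
  induction n with
  | zero => rfl
  | succ n ih => rw [engel, ih, engel]

lemma map_engel (f : G →* H) (x y : G) (n : ℕ) : f (engel x y n) = engel (f x) (f y) n := by
  induction n with
  | zero => rfl
  | succ n ih => rw [engel, map_fcomm, ih, engel]

end Commutators

section Carry

variable {m : ℕ}

/-- The carry in the addition of the representatives of `i` and `j` in `{0, …, m - 1}`: the
2-cocycle of `ℤ/m` with coefficients in `ℤ` whose extension is `ℤ` itself. -/
def carry (i j : ZMod m) : ℕ := (i.val + j.val) / m

lemma carry_comm (i j : ZMod m) : carry i j = carry j i := by
  rw [carry, carry, add_comm]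

variable [NeZero m]

lemma carry_zero_left (j : ZMod m) : carry 0 j = 0 := by
  simp [carry, Nat.div_eq_of_lt j.val_lt]

lemma carry_zero_right (i : ZMod m) : carry i 0 = 0 := by
  rw [carry_comm, carry_zero_left]

lemma val_add_mul_carry (i j : ZMod m) : (i + j).val + m * carry i j = i.val + j.val := by
  rw [ZMod.val_add, carry, Nat.mod_add_div]

lemma carry_add_carry (i j k : ZMod m) :
    carry i j + carry (i + j) k = carry j k + carry i (j + k) := by
  have h₁ := val_add_mul_carry i j
  have h₂ := val_add_mul_carry (i + j) k
  have h₃ := val_add_mul_carry j k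
  have h₄ := val_add_mul_carry i (j + k)
  rw [← add_assoc i j k] at h₄
  refine Nat.eq_of_mul_eq_mul_left (NeZero.pos m) ?_
  rw [mul_add, mul_add]
  lia

lemma mul_val_div_add_carry (k : ℕ) (i : ZMod m) :
    k * i.val / m + carry ((k : ZMod m) * i) i = (k + 1) * i.val / m := by
  rw [carry, ZMod.val_mul, ZMod.val_natCast, Nat.mod_mul_mod, add_comm,
    ← Nat.add_mul_div_left _ _ (NeZero.pos m), add_right_comm, Nat.mod_add_div, add_one_mul]

end Carry

/-- The data defining an extension of `ℤ/m` by the additive group of `R`: the generator of `ℤ/m`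
acts as multiplication by `ζ`, and its chosen lift has `m`-th power `z`. -/
structure CyclicExtensionData (m : ℕ) (R : Type*) [CommRing R] where
  ζ : R
  z : R
  ζ_pow : ζ ^ m = 1
  ζ_mul_z : ζ * z = z

namespace CyclicExtensionData

variable {m : ℕ} {R : Type*} [CommRing R] (D : CyclicExtensionData m R)

/-- The action of `i : ℤ/m` on `R`, as an element of `R`. -/
def rot (i : ZMod m) : R := D.ζ ^ i.val

lemma rot_zero : D.rot 0 = 1 := by
  simp [rot]

lemma rot_mul_z (i : ZMod m) : D.rot i * D.z = D.z := by
  rw [rot]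
  induction i.val with
  | zero => rw [pow_zero, one_mul]
  | succ n ih => rw [pow_succ, mul_assoc, D.ζ_mul_z, ih]

lemma rot_add [NeZero m] (i j : ZMod m) : D.rot (i + j) = D.rot i * D.rot j := by
  rw [rot, rot, rot, ← pow_add, ZMod.val_add, ← pow_eq_pow_mod _ D.ζ_pow]

end CyclicExtensionData

/-- The extension of `ℤ/m` by `R` given by `D`. If `x` is the chosen lift of `1 : ℤ/m`, then
`⟨i, v⟩` stands for `x ^ i * v` with `0 ≤ i < m`. -/
@[ext] structure CyclicExtension {m : ℕ} {R : Type*} [CommRing R]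
    (D : CyclicExtensionData m R) where
  index : ZMod m
  vec : R

namespace CyclicExtension

variable {m : ℕ} {R : Type*} [CommRing R] {D : CyclicExtensionData m R}

instance : Mul (CyclicExtension D) :=
  ⟨fun g h => ⟨g.index + h.index,
    D.rot h.index * g.vec + h.vec + carry g.index h.index * D.z⟩⟩

instance : One (CyclicExtension D) := ⟨⟨0, 0⟩⟩

instance : Inv (CyclicExtension D) :=
  ⟨fun g => ⟨-g.index, -D.rot (-g.index) * (g.vec + carry (-g.index) g.index * D.z)⟩⟩

lemma index_mul (g h : CyclicExtension D) : (g * h).index = g.index + h.index := rfl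

lemma vec_mul (g h : CyclicExtension D) :
    (g * h).vec = D.rot h.index * g.vec + h.vec + carry g.index h.index * D.z := rfl

lemma index_one : (1 : CyclicExtension D).index = 0 := rfl

lemma vec_one : (1 : CyclicExtension D).vec = 0 := rfl

lemma index_inv (g : CyclicExtension D) : g⁻¹.index = -g.index := rfl

lemma vec_inv (g : CyclicExtension D) :
    g⁻¹.vec = -D.rot (-g.index) * (g.vec + carry (-g.index) g.index * D.z) := rfl

/-- The embedding of the normal subgroup `R`. -/
def ofVec (v : R) : CyclicExtension D := ⟨0, v⟩

lemma ofVec_inj {v w : R} : (ofVec v : CyclicExtension D) = ofVec w ↔ v = w := by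
  simp [ofVec]

lemma ofVec_zero : (ofVec 0 : CyclicExtension D) = 1 := rfl

lemma ofVec_vec {g : CyclicExtension D} (hg : g.index = 0) : ofVec g.vec = g := by
  rw [ofVec, ← hg]

lemma index_ofVec (v : R) : (ofVec v : CyclicExtension D).index = 0 := rfl

lemma vec_ofVec (v : R) : (ofVec v : CyclicExtension D).vec = v := rfl

variable [NeZero m]

protected lemma mul_assoc (g h k : CyclicExtension D) : g * h * k = g * (h * k) := by
  ext
  · simp only [index_mul, add_assoc]
  · have hcarry := congrArg (Nat.cast (R := R)) (carry_add_carry g.index h.index k.index)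
    push_cast at hcarry
    simp only [vec_mul, index_mul, D.rot_add]
    linear_combination carry g.index h.index * D.rot_mul_z k.index + D.z * hcarry

protected lemma inv_mul_cancel (g : CyclicExtension D) : g⁻¹ * g = 1 := by
  ext
  · rw [index_mul, index_inv, neg_add_cancel, index_one]
  · have hrot : D.rot g.index * D.rot (-g.index) = 1 := by
      rw [← D.rot_add, add_neg_cancel, D.rot_zero]
    rw [vec_mul, vec_inv, index_inv, vec_one]
    linear_combination -(g.vec + carry (-g.index) g.index * D.z) * hrot

instance : Group (CyclicExtension D) :=
  Group.ofLeftAxioms CyclicExtension.mul_assoc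
    (fun g => by
      ext
      · rw [index_mul, index_one, zero_add]
      · rw [vec_mul, vec_one, index_one, carry_zero_left]
        ring)
    CyclicExtension.inv_mul_cancel

/-- The projection onto `ℤ/m`. -/
def indexHom : CyclicExtension D →* Multiplicative (ZMod m) where
  toFun g := .ofAdd g.index
  map_one' := rfl
  map_mul' _ _ := rfl

/-- The character induced by a ring homomorphism on which the extension data become trivial. -/
def vecHom {A : Type*} [CommRing A] (π : R →+* A) (hζ : π D.ζ = 1) (hz : π D.z = 0) :
    CyclicExtension D →* Multiplicative A where
  toFun g := .ofAdd (π g.vec)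
  map_one' := by rw [vec_one, map_zero, ofAdd_zero]
  map_mul' g h := by
    simp [vec_mul, CyclicExtensionData.rot, hζ, hz]

lemma vec_mul_ofVec (g : CyclicExtension D) (v : R) : (g * ofVec v).vec = g.vec + v := by
  rw [vec_mul, index_ofVec, vec_ofVec, D.rot_zero, carry_zero_right]
  ring

lemma ofVec_mul_ofVec (v w : R) : (ofVec v * ofVec w : CyclicExtension D) = ofVec (v + w) :=
  CyclicExtension.ext (add_zero 0) (vec_mul_ofVec _ w)

lemma ofVec_pow (v : R) (k : ℕ) : (ofVec v : CyclicExtension D) ^ k = ofVec (k * v) := by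
  induction k with
  | zero => rw [pow_zero, Nat.cast_zero, zero_mul, ofVec_zero]
  | succ k ih => rw [pow_succ, ih, ofVec_mul_ofVec, Nat.cast_succ, add_one_mul]

lemma index_pow (g : CyclicExtension D) (k : ℕ) : (g ^ k).index = k * g.index := by
  induction k with
  | zero => rw [pow_zero, index_one, Nat.cast_zero, zero_mul]
  | succ k ih => rw [pow_succ, index_mul, ih, Nat.cast_succ, add_one_mul]

lemma vec_pow (g : CyclicExtension D) (k : ℕ) : (g ^ k).vec =
    (∑ j ∈ Finset.range k, D.rot g.index ^ j) * g.vec + (k * g.index.val / m : ℕ) * D.z := by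
  induction k with
  | zero => simp [vec_one]
  | succ k ih =>
    rw [pow_succ, vec_mul, ih, index_pow, geom_sum_succ, ← mul_val_div_add_carry, Nat.cast_add]
    linear_combination (k * g.index.val / m : ℕ) * D.rot_mul_z g.index

lemma pow_self (g : CyclicExtension D) : g ^ m =
    ofVec ((∑ j ∈ Finset.range m, D.rot g.index ^ j) * g.vec + g.index.val * D.z) := by
  ext
  · rw [index_pow, ZMod.natCast_self, zero_mul, index_ofVec]
  · rw [vec_pow, vec_ofVec, Nat.mul_div_cancel_left _ (NeZero.pos m)]

lemma fcomm_eq_ofVec (g h : CyclicExtension D) :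
    fcomm g h = ofVec ((D.rot h.index - 1) * g.vec - (D.rot g.index - 1) * h.vec) := by
  refine mul_left_cancel (a := h * g) ((mul_mul_fcomm g h).trans ?_)
  ext
  · rw [index_mul, index_mul, index_mul, index_ofVec, add_zero, add_comm]
  · rw [vec_mul_ofVec, vec_mul, vec_mul, carry_comm]
    ring

lemma engel_ofVec (x : CyclicExtension D) (v : R) (k : ℕ) :
    engel x (ofVec v) k = ofVec ((D.rot x.index - 1) ^ k * v) := by
  induction k with
  | zero => rw [engel, pow_zero, one_mul]
  | succ k ih => rw [engel, fcomm_eq_ofVec, ih, index_ofVec, vec_ofVec, D.rot_zero]; ring_nf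

end CyclicExtension

section EisensteinQuot

open Polynomial

/-- The polynomial `X² + 3X + 3 - b Xⁿ`, a perturbation of the minimal polynomial of `ζ₃ - 1`. -/
noncomputable def eisensteinPoly (n b : ℕ) : ℤ[X] := X ^ 2 + 3 * X + 3 - (b : ℤ[X]) * X ^ n

/-- The ring `ℤ[X] / (X² + 3X + 3 - b Xⁿ, Xⁿ⁺¹)`. For `b = 0` it is `ℤ[ζ₃] / (ζ₃ - 1)ⁿ⁺¹`; the
perturbation turns the trace `1 + ζ + ζ²` of the automorphism `ζ = 1 + X` into `b Xⁿ`. -/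
abbrev EisensteinQuot (n b : ℕ) : Type := ℤ[X] ⧸ Ideal.span {eisensteinPoly n b, X ^ (n + 1)}

namespace EisensteinQuot

variable {n b : ℕ}

/-- The class of `X`, in the role of the uniformizer `ζ₃ - 1`. -/
noncomputable def ϖ : EisensteinQuot n b := Ideal.Quotient.mk _ X

lemma ϖ_pow_succ : (ϖ : EisensteinQuot n b) ^ (n + 1) = 0 :=
  Ideal.Quotient.eq_zero_iff_mem.2 (Ideal.subset_span (by simp))

lemma ϖ_sq_add_three_mul_ϖ_add_three :
    (ϖ : EisensteinQuot n b) ^ 2 + 3 * ϖ + 3 = (b : EisensteinQuot n b) * ϖ ^ n := by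
  have hmem : eisensteinPoly n b ∈ Ideal.span {eisensteinPoly n b, X ^ (n + 1)} :=
    Ideal.subset_span (by simp)
  rw [← Ideal.Quotient.eq_zero_iff_mem] at hmem
  change Ideal.Quotient.mk _ (X ^ 2 + 3 * X + 3 - (b : ℤ[X]) * X ^ n) = 0 at hmem
  simpa [sub_eq_zero, ϖ, map_ofNat (Ideal.Quotient.mk _) 3] using hmem

lemma exists_eq_intCast_add_ϖ_mul (r : EisensteinQuot n b) :
    ∃ (q : ℤ) (t : EisensteinQuot n b), r = (q : EisensteinQuot n b) + ϖ * t := by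
  obtain ⟨p, rfl⟩ := Ideal.Quotient.mk_surjective r
  refine ⟨p.coeff 0, Ideal.Quotient.mk _ p.divX, ?_⟩
  conv_lhs => rw [← p.X_mul_divX_add]
  simp [ϖ, add_comm]

lemma ϖ_mul_one_add_ϖ_pow_sub_one (e : ℕ) :
    (1 + ϖ : EisensteinQuot n b) ^ e - 1 = ϖ * ∑ j ∈ Finset.range e, (1 + ϖ) ^ j := by
  rw [← mul_geom_sum, add_sub_cancel_left]

lemma one_add_ϖ_pow_three : (1 + ϖ : EisensteinQuot n b) ^ 3 = 1 := by
  linear_combination (ϖ : EisensteinQuot n b) * ϖ_sq_add_three_mul_ϖ_add_three + b * ϖ_pow_succ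

variable [NeZero n]

lemma coeff_zero_eisensteinPoly : (eisensteinPoly n b).coeff 0 = 3 := by
  simp [eisensteinPoly, mul_coeff_zero, coeff_X_pow, NeZero.ne' n]

-- `Xⁿ = A (X² + 3X + 3 - b Xⁿ) + B Xⁿ⁺¹` forces `Xⁿ ∣ A`, and then `3 ∣ 1` at `X = 0`.
lemma ϖ_pow_ne_zero : (ϖ : EisensteinQuot n b) ^ n ≠ 0 := by
  rw [ϖ, ← map_pow, Ne, Ideal.Quotient.eq_zero_iff_mem, Ideal.mem_span_pair]
  rintro ⟨A, B, hAB⟩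
  have hdvd : X ^ n ∣ A * eisensteinPoly n b := ⟨1 - B * X, by linear_combination hAB⟩
  have hX : ¬ X ∣ eisensteinPoly n b := by
    rw [X_dvd_iff, coeff_zero_eisensteinPoly]
    decide
  obtain ⟨A', rfl⟩ := prime_X.pow_dvd_of_dvd_mul_right n hX hdvd
  have hone : A' * eisensteinPoly n b + B * X = 1 :=
    mul_left_cancel₀ (pow_ne_zero n X_ne_zero) (by linear_combination hAB)
  have hcoeff := congrArg (coeff · 0) hone
  simp only [coeff_add, mul_coeff_zero, coeff_zero_eisensteinPoly, coeff_X_zero, mul_zero,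
    add_zero, coeff_one_zero] at hcoeff
  lia

lemma three_mul_ϖ_pow : (3 : EisensteinQuot n b) * ϖ ^ n = 0 := by
  have hϖ : (ϖ : EisensteinQuot n b) * ϖ ^ n = 0 := by rw [← pow_succ', ϖ_pow_succ]
  obtain ⟨t, ht⟩ : (ϖ : EisensteinQuot n b) ∣ ϖ ^ n := dvd_pow_self ϖ (NeZero.ne n)
  linear_combination ϖ ^ n * ϖ_sq_add_three_mul_ϖ_add_three (n := n) (b := b) +
    (b * t - ϖ - 3) * hϖ + b * ϖ ^ n * ht

/-- The reduction `ϖ ↦ 0` onto the residue field `𝔽₃`. -/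
noncomputable def residue : EisensteinQuot n b →+* ZMod 3 :=
  Ideal.Quotient.lift _ ((Int.castRingHom (ZMod 3)).comp constantCoeff) (by
    suffices Ideal.span {eisensteinPoly n b, X ^ (n + 1)} ≤
        RingHom.ker ((Int.castRingHom (ZMod 3)).comp constantCoeff) from
      fun p hp => this hp
    rw [Ideal.span_le, Set.pair_subset_iff]
    constructor
    · change ((eisensteinPoly n b).coeff 0 : ZMod 3) = 0
      rw [coeff_zero_eisensteinPoly]
      rfl
    · simp)

lemma residue_ϖ : residue (ϖ : EisensteinQuot n b) = 0 :=
  (Ideal.Quotient.lift_mk ..).trans (by simp)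

lemma mul_ϖ_pow_eq_zero_iff {r : EisensteinQuot n b} : r * ϖ ^ n = 0 ↔ residue r = 0 := by
  have hϖ : (ϖ : EisensteinQuot n b) * ϖ ^ n = 0 := by rw [← pow_succ', ϖ_pow_succ]
  obtain ⟨q, t, rfl⟩ := exists_eq_intCast_add_ϖ_mul r
  rw [add_mul, mul_right_comm, hϖ, zero_mul, add_zero, map_add, map_mul, residue_ϖ, zero_mul,
    add_zero, map_intCast, ZMod.intCast_zmod_eq_zero_iff_dvd]
  refine ⟨fun hq => ?_, ?_⟩
  · by_contra hdvd
    obtain ⟨u, v, huv⟩ := ((Int.prime_three.coprime_iff_not_dvd).2 hdvd)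
    refine ϖ_pow_ne_zero (n := n) (b := b) ?_
    have huv' := congrArg (Int.cast (R := EisensteinQuot n b)) huv
    push_cast at huv'
    linear_combination u * three_mul_ϖ_pow (n := n) (b := b) + v * hq - ϖ ^ n * huv'
  · rintro ⟨q, rfl⟩
    push_cast
    linear_combination (q : EisensteinQuot n b) * three_mul_ϖ_pow (n := n) (b := b)

lemma mul_ϖ_pow_inj {r s : EisensteinQuot n b} :
    r * ϖ ^ n = s * ϖ ^ n ↔ residue r = residue s := by
  rw [← sub_eq_zero, ← sub_mul, mul_ϖ_pow_eq_zero_iff, map_sub, sub_eq_zero]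

end EisensteinQuot

end EisensteinQuot

open EisensteinQuot

/-- The extension data of `ℤ/3` by `EisensteinQuot n b` in which the generator acts as `1 + ϖ` and
has cube `a ϖⁿ`. -/
noncomputable def eisensteinExtData (n a b : ℕ) : CyclicExtensionData 3 (EisensteinQuot n b) where
  ζ := 1 + ϖ
  z := (a : EisensteinQuot n b) * ϖ ^ n
  ζ_pow := one_add_ϖ_pow_three
  ζ_mul_z := by linear_combination (a : EisensteinQuot n b) * ϖ_pow_succ

/-- The group with normal subgroup `EisensteinQuot n b` detecting the exponents of `s_c`, for
`c = n + 1`, in the relators `R_x` and `R_y`. The group `EisensteinExt 2 0 1` is the wreath product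
`C₃ ≀ C₃`. -/
abbrev EisensteinExt (n a b : ℕ) : Type := CyclicExtension (eisensteinExtData n a b)

namespace EisensteinExt

open CyclicExtension

variable {n a b : ℕ}

lemma exists_rot_sub_one_eq_ϖ_mul [NeZero n] (e : ZMod 3) :
    ∃ r, (eisensteinExtData n a b).rot e - 1 = ϖ * r ∧ residue r = e :=
  ⟨_, ϖ_mul_one_add_ϖ_pow_sub_one e.val, by simp [residue_ϖ]⟩

lemma one_add_rot_add_rot_sq {e : ZMod 3} (he : e ≠ 0) :
    1 + (eisensteinExtData n a b).rot e + (eisensteinExtData n a b).rot e ^ 2 =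
      (b : EisensteinQuot n b) * ϖ ^ n := by
  have htrace := ϖ_sq_add_three_mul_ϖ_add_three (n := n) (b := b)
  obtain rfl | rfl : e = 1 ∨ e = 2 := by decide +revert
  · rw [show (eisensteinExtData n a b).rot 1 = 1 + ϖ from pow_one _]
    linear_combination htrace
  · rw [show (eisensteinExtData n a b).rot 2 = (1 + ϖ) ^ 2 from rfl]
    linear_combination htrace + (1 + ϖ) * one_add_ϖ_pow_three (n := n) (b := b)

lemma three_eq_of_ne_zero [NeZero n] {e : ZMod 3} (he : e ≠ 0) :
    (3 : EisensteinQuot n b) = 2 * ((eisensteinExtData n a b).rot e - 1) ^ 2 +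
      ((eisensteinExtData n a b).rot e - 1) ^ 3 + (b : EisensteinQuot n b) * ϖ ^ n := by
  obtain ⟨r, hr, -⟩ := exists_rot_sub_one_eq_ϖ_mul (n := n) (a := a) (b := b) e
  have htrace := one_add_rot_add_rot_sq (n := n) (a := a) (b := b) he
  linear_combination (2 - (eisensteinExtData n a b).rot e) * htrace -
    (b : EisensteinQuot n b) * ϖ ^ n * hr - (b : EisensteinQuot n b) * r * ϖ_pow_succ

end EisensteinExt

/-- The relations of `G_Q(n + 1, x³ s_c⁻ᵃ, y³ s₃⁻² s₄⁻¹ s_c⁻ᵇ)` between the elements `x` and `y`,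
after elimination of the generators `s_j` and `t₃`. -/
structure GQRelations (n a b : ℕ) {G : Type*} [Group G] (x y : G) : Prop where
  t_cube : fcomm (fcomm y x) y ^ 3 = 1
  engel_cube : ∀ k, 1 ≤ k → k + 3 ≤ n →
    engel x y k ^ 3 = engel x y (k + 2) ^ 2 * engel x y (k + 3)
  engel_top_cube : engel x y (n - 2) ^ 3 = engel x y n ^ 2
  x_cube : x ^ 3 = engel x y n ^ a
  y_cube : y ^ 3 = engel x y n ^ b * engel x y 3 * engel x y 2 ^ 2

lemma GQRelations.map {n a b : ℕ} {G H : Type*} [Group G] [Group H] {x y : G}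
    (h : GQRelations n a b x y) (f : G →* H) : GQRelations n a b (f x) (f y) where
  t_cube := by simp only [← map_fcomm, ← map_pow, h.t_cube, map_one]
  engel_cube k hk hkn := by simp only [← map_engel, ← map_pow, ← map_mul, h.engel_cube k hk hkn]
  engel_top_cube := by simp only [← map_engel, ← map_pow, h.engel_top_cube]
  x_cube := by simp only [← map_engel, ← map_pow, h.x_cube]
  y_cube := by simp only [← map_engel, ← map_pow, ← map_mul, h.y_cube]

namespace EisensteinExt

open CyclicExtension

variable {n a b : ℕ}

lemma cube_of_index_ne_zero {g : EisensteinExt n a b} (hg : g.index ≠ 0) :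
    g ^ 3 = ofVec (((b : EisensteinQuot n b) * g.vec +
      (a : EisensteinQuot n b) * (g.index.val : EisensteinQuot n b)) * ϖ ^ n) := by
  have htrace := one_add_rot_add_rot_sq (a := a) (b := b) (n := n) hg
  rw [pow_self, Finset.sum_range_succ, Finset.sum_range_succ, Finset.sum_range_one, pow_zero,
    pow_one, htrace, show (eisensteinExtData n a b).z = (a : EisensteinQuot n b) * ϖ ^ n from rfl]
  ring_nf

variable [NeZero n]

/-- The character `⟨i, v⟩ ↦ residue v`. -/
noncomputable def residueHom : EisensteinExt n a b →* Multiplicative (ZMod 3) :=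
  vecHom residue (by simp [eisensteinExtData, residue_ϖ])
    (by simp [eisensteinExtData, residue_ϖ, NeZero.ne n])

lemma residueHom_apply (g : EisensteinExt n a b) : residueHom g = .ofAdd (residue g.vec) := rfl

lemma exists_rot_sub_one_pow_eq (a : ℕ) (e : ZMod 3) (k : ℕ) :
    ∃ r, ((eisensteinExtData n a b).rot e - 1) ^ k = r * ϖ ^ k ∧ residue r = e ^ k := by
  obtain ⟨r, hr, hres⟩ := exists_rot_sub_one_eq_ϖ_mul (a := a) (b := b) (n := n) e
  exact ⟨r ^ k, by rw [hr, mul_pow, mul_comm], by rw [map_pow, hres]⟩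

lemma exists_engel_succ_eq (x y : EisensteinExt n a b) (k : ℕ) :
    ∃ r, engel x y (k + 1) = ofVec (r * ϖ ^ (k + 1)) ∧
      residue r = x.index ^ k * (x.index * residue y.vec - y.index * residue x.vec) := by
  obtain ⟨r, hr, hr_res⟩ := exists_rot_sub_one_eq_ϖ_mul (a := a) (b := b) (n := n) x.index
  obtain ⟨s, hs, hs_res⟩ := exists_rot_sub_one_eq_ϖ_mul (a := a) (b := b) (n := n) y.index
  refine ⟨r ^ k * (r * y.vec - s * x.vec), ?_, by simp [hr_res, hs_res]⟩
  rw [engel_succ_eq_engel_fcomm, fcomm_eq_ofVec, engel_ofVec, ofVec_inj, hr, hs]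
  ring

lemma engel_eq_one (x y : EisensteinExt n a b) {k : ℕ} (hk : n < k) : engel x y k = 1 := by
  obtain ⟨k, rfl⟩ := Nat.exists_eq_add_of_le' (Nat.one_le_of_lt hk)
  obtain ⟨r, hr, -⟩ := exists_engel_succ_eq x y k
  rw [hr, pow_eq_zero_of_le hk ϖ_pow_succ, mul_zero, ofVec_zero]

variable {a' b' : ℕ} {x : EisensteinExt n a b} {v : EisensteinQuot n b}

lemma engel_ofVec_cube (hx : x.index ≠ 0) {k : ℕ} (hk : 1 ≤ k) :
    engel x (ofVec v) k ^ 3 = engel x (ofVec v) (k + 2) ^ 2 * engel x (ofVec v) (k + 3) := by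
  obtain ⟨k, rfl⟩ := Nat.exists_eq_add_of_le' hk
  obtain ⟨r, hr, -⟩ := exists_rot_sub_one_eq_ϖ_mul (a := a) (b := b) (n := n) x.index
  have hthree := three_eq_of_ne_zero (n := n) (a := a) (b := b) hx
  simp only [engel_ofVec, ofVec_pow, ofVec_mul_ofVec, ofVec_inj]
  push_cast
  set μ := (eisensteinExtData n a b).rot x.index - 1
  linear_combination μ ^ (k + 1) * v * hthree +
    (b : EisensteinQuot n b) * ϖ ^ n * μ ^ k * v * hr +
    (b : EisensteinQuot n b) * r * μ ^ k * v * ϖ_pow_succ (n := n) (b := b)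

lemma cube_eq_engel_ofVec_pow_iff (hx : x.index ≠ 0) :
    x ^ 3 = engel x (ofVec v) n ^ a' ↔
      b * residue x.vec + a * x.index = a' * (x.index ^ n * residue v) := by
  obtain ⟨r, hr, hres⟩ := exists_rot_sub_one_pow_eq (n := n) (b := b) a x.index n
  rw [cube_of_index_ne_zero hx, engel_ofVec, ofVec_pow, ofVec_inj, hr, mul_right_comm r,
    ← mul_assoc, mul_ϖ_pow_inj]
  simp [hres]

lemma ofVec_cube_eq_iff (hx : x.index ≠ 0) :
    (ofVec v) ^ 3 = engel x (ofVec v) n ^ b' * engel x (ofVec v) 3 * engel x (ofVec v) 2 ^ 2 ↔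
      b * residue v = b' * (x.index ^ n * residue v) := by
  obtain ⟨r, hr, hres⟩ := exists_rot_sub_one_pow_eq (n := n) (b := b) a x.index n
  have hthree := three_eq_of_ne_zero (n := n) (a := a) (b := b) hx
  have hresidue : b * residue v = b' * (x.index ^ n * residue v) ↔
      residue ((b : EisensteinQuot n b) * v) = residue ((b' : EisensteinQuot n b) * (r * v)) := by
    simp [hres]
  rw [hresidue, ← mul_ϖ_pow_inj]
  simp only [engel_ofVec, ofVec_pow, ofVec_mul_ofVec, ofVec_inj, hr]
  push_cast
  rw [← sub_eq_zero, ← sub_eq_zero (a := _ * _)]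
  refine Eq.congr_left ?_
  linear_combination v * hthree

theorem gqRelations_ofVec_iff (hn : 3 ≤ n) (hx : x.index ≠ 0) :
    GQRelations n a' b' x (ofVec v) ↔
      b * residue x.vec + a * x.index = a' * (x.index ^ n * residue v) ∧
        b * residue v = b' * (x.index ^ n * residue v) := by
  rw [← cube_eq_engel_ofVec_pow_iff hx, ← ofVec_cube_eq_iff hx]
  refine ⟨fun h => ⟨h.x_cube, h.y_cube⟩, fun ⟨hx_cube, hy_cube⟩ => ⟨?_, ?_, ?_, hx_cube, hy_cube⟩⟩
  · simp [fcomm_eq_ofVec, index_ofVec, CyclicExtensionData.rot_zero, ofVec_zero]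
  · exact fun k hk _ => engel_ofVec_cube hx hk
  · rw [engel_ofVec_cube hx (by lia), engel_eq_one _ _ (by lia : n < n - 2 + 3), mul_one,
      Nat.sub_add_cancel (by lia)]

end EisensteinExt

/-- The wreath product `C₃ ≀ C₃`: as `1 + ζ + ζ² = ϖ²` for `ζ = 1 + ϖ`, the ring
`EisensteinQuot 2 1` is the group ring of `C₃` over `𝔽₃`. -/
abbrev Wreath : Type := EisensteinExt 2 0 1

namespace Wreath

open CyclicExtension EisensteinExt

lemma three_eq_zero : (3 : EisensteinQuot 2 1) = 0 := by
  have htrace := ϖ_sq_add_three_mul_ϖ_add_three (n := 2) (b := 1)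
  have hζ := one_add_ϖ_pow_three (n := 2) (b := 1)
  push_cast at htrace
  linear_combination (1 + ϖ) ^ 2 * htrace - 3 * hζ

lemma ofVec_cube (v : EisensteinQuot 2 1) : (ofVec v : Wreath) ^ 3 = 1 := by
  rw [ofVec_pow, Nat.cast_ofNat, three_eq_zero, zero_mul, ofVec_zero]

lemma ofVec_mul_ϖ_sq_inj {r s : EisensteinQuot 2 1} :
    (ofVec (r * ϖ ^ 2) : Wreath) = ofVec (s * ϖ ^ 2) ↔ residue r = residue s := by
  rw [ofVec_inj, mul_ϖ_pow_inj]

lemma exists_cube_eq (g : Wreath) :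
    ∃ r, g ^ 3 = ofVec (r * ϖ ^ 2) ∧ residue r = g.index ^ 2 * residue g.vec := by
  by_cases hg : g.index = 0
  · refine ⟨0, ?_, by simp [hg]⟩
    rw [← ofVec_vec hg, ofVec_cube, zero_mul, ofVec_zero]
  · refine ⟨g.vec, ?_, ?_⟩
    · rw [cube_of_index_ne_zero hg]
      simp
    · have hsq : g.index ^ 2 = 1 := by generalize g.index = i at *; decide +revert
      rw [hsq, one_mul]

lemma engel_succ_cube (x y : Wreath) (k : ℕ) : engel x y (k + 1) ^ 3 = 1 := by
  rw [engel, fcomm_eq_ofVec, ofVec_cube]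

theorem gqRelations_iff {n a b : ℕ} (hn : 3 ≤ n) {x y : Wreath} :
    GQRelations n a b x y ↔ x.index ^ 2 * residue x.vec = 0 ∧
      y.index ^ 2 * residue y.vec =
        2 * (x.index * (x.index * residue y.vec - y.index * residue x.vec)) := by
  obtain ⟨rx, hrx, hrx_res⟩ := exists_cube_eq x
  obtain ⟨ry, hry, hry_res⟩ := exists_cube_eq y
  obtain ⟨s, hs, hs_res⟩ := exists_engel_succ_eq x y 1
  rw [pow_one] at hs_res
  have hengel (k : ℕ) (hk : 3 ≤ k) : engel x y k = 1 := engel_eq_one x y hk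
  have hx_cube : x ^ 3 = engel x y n ^ a ↔ x.index ^ 2 * residue x.vec = 0 := by
    rw [hengel n hn, one_pow, hrx, ← hrx_res, ← mul_ϖ_pow_eq_zero_iff, ← ofVec_zero, ofVec_inj]
  have hy_cube : y ^ 3 = engel x y n ^ b * engel x y 3 * engel x y 2 ^ 2 ↔
      y.index ^ 2 * residue y.vec =
        2 * (x.index * (x.index * residue y.vec - y.index * residue x.vec)) := by
    rw [hengel n hn, hengel 3 le_rfl, one_pow, one_mul, one_mul, hry, hs, ofVec_pow, ← mul_assoc,
      ofVec_mul_ϖ_sq_inj, hry_res, map_mul, map_natCast, hs_res, Nat.cast_ofNat]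
  rw [← hx_cube, ← hy_cube]
  refine ⟨fun h => ⟨h.x_cube, h.y_cube⟩, fun ⟨hx_cube, hy_cube⟩ => ⟨?_, ?_, ?_, hx_cube, hy_cube⟩⟩
  · rw [fcomm_eq_ofVec, ofVec_cube]
  · intro k hk _
    obtain ⟨k, rfl⟩ := Nat.exists_eq_add_of_le' hk
    rw [engel_succ_cube, hengel _ (by lia), hengel _ (by lia), one_pow, one_mul]
  · obtain ⟨k, rfl⟩ := Nat.exists_eq_add_of_le' hn
    rw [show k + 3 - 2 = k + 1 from rfl, engel_succ_cube, hengel _ hn, one_pow]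

theorem index_eq_zero_and_residue_eq_zero {n a b : ℕ} (hn : 3 ≤ n) {x y : Wreath}
    (h : GQRelations n a b x y)
    (hdet : residue x.vec * y.index ≠ x.index * residue y.vec) :
    x.index = 0 ∧ residue y.vec = 0 := by
  obtain ⟨hx, hy⟩ := (gqRelations_iff hn).1 h
  generalize x.index = i, residue x.vec = v, y.index = j, residue y.vec = w at *
  -- If `i ≠ 0`, then `v = 0 ≠ w` and `j² = 2 i²`, but `2` is not a square modulo `3`.
  decide +revert

end Wreath

namespace GQdef

/-- The relator `x³ s_c⁻ᵃ`. -/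
def xRel (c a : ℕ) : FreeGroup ℕ := xw ^ 3 * (sw c ^ a)⁻¹

/-- The relator `y³ s₃⁻² s₄⁻¹ s_c⁻ᵇ`. -/
def yRel (c b : ℕ) : FreeGroup ℕ := yw ^ 3 * (sw 3 ^ 2)⁻¹ * (sw 4)⁻¹ * (sw c ^ b)⁻¹

lemma exists_eq_xRel_of_mem_RxSet {c : ℕ} {R : FreeGroup ℕ} (hR : R ∈ RxSet c) :
    ∃ a < 2, R = xRel c a := by
  rcases hR with rfl | rfl
  · exact ⟨0, by norm_num, by simp [xRel]⟩
  · exact ⟨1, by norm_num, by simp [xRel]⟩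

lemma exists_eq_yRel_of_mem_RySet {c : ℕ} {R : FreeGroup ℕ} (hR : R ∈ RySet c) :
    ∃ b < 3, R = yRel c b := by
  rcases hR with rfl | rfl | rfl
  · exact ⟨0, by norm_num, by simp [yRel]⟩
  · exact ⟨1, by norm_num, by simp [yRel]⟩
  · exact ⟨2, by norm_num, by simp [yRel]⟩

end GQdef

/-- The group `G_Q(n + 1, x³ s_c⁻ᵃ, y³ s₃⁻² s₄⁻¹ s_c⁻ᵇ)`, where `c = n + 1`. -/
abbrev StdGQ (n a b : ℕ) : Type := GQ (n + 1) (xRel (n + 1) a) (yRel (n + 1) b)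

namespace StdGQ

variable {n a b : ℕ} {G : Type*} [Group G]

/-- The values, on the generators of `G_Q(n + 1, …)`, of a homomorphism sending the first two
of them to `x` and `y`. -/
def generatorImage (n : ℕ) (x y : G) : ℕ → G
  | 0 => x
  | 1 => y
  | 2 => fcomm (fcomm y x) y
  | k + 3 => if k < n then engel x y (k + 1) else 1

lemma map_rels_eq_one_iff {c : ℕ} {Rx Ry : FreeGroup ℕ} {θ : FreeGroup ℕ →* G} :
    (∀ r ∈ rels c Rx Ry, θ r = 1) ↔
      (θ (sw 2) = fcomm (θ yw) (θ xw) ∧ θ t3w = fcomm (θ (sw 2)) (θ yw) ∧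
        (∀ j, 3 ≤ j → j ≤ c → θ (sw j) = fcomm (θ (sw (j - 1))) (θ xw)) ∧
        ∀ k, c + 2 ≤ k → θ (.of k) = 1) ∧
      θ t3w ^ 3 = 1 ∧
      (∀ j, 2 ≤ j → j ≤ c - 3 → θ (sw j) ^ 3 = θ (sw (j + 2)) ^ 2 * θ (sw (j + 3))) ∧
      θ (sw (c - 2)) ^ 3 = θ (sw c) ^ 2 ∧ θ Rx = 1 ∧ θ Ry = 1 := by
  have hfamily {P : ℕ → Prop} {w : ℕ → FreeGroup ℕ} :
      (∀ r, (∃ j, P j ∧ r = w j) → θ r = 1) ↔ ∀ j, P j → θ (w j) = 1 :=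
    ⟨fun h j hj => h _ ⟨j, hj, rfl⟩, fun h _ ⟨j, hj, hr⟩ => hr ▸ h j hj⟩
  simp only [rels, Set.mem_union, Set.mem_insert_iff, Set.mem_singleton_iff, Set.mem_ofPred_eq,
    or_imp, forall_and, forall_eq, ← and_assoc, hfamily, map_mul, map_inv, map_pow, map_fcomm,
    mul_inv_eq_one]
  simp only [and_imp]
  tauto

lemma forall_map_of_eq_generatorImage_iff (hn : 0 < n) {θ : FreeGroup ℕ →* G} :
    (∀ k, θ (.of k) = generatorImage n (θ xw) (θ yw) k) ↔
      θ (sw 2) = fcomm (θ yw) (θ xw) ∧ θ t3w = fcomm (θ (sw 2)) (θ yw) ∧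
        (∀ j, 3 ≤ j → j ≤ n + 1 → θ (sw j) = fcomm (θ (sw (j - 1))) (θ xw)) ∧
        ∀ k, n + 1 + 2 ≤ k → θ (.of k) = 1 := by
  constructor
  · intro h
    have hs (k : ℕ) (hk : k < n) : θ (sw (k + 2)) = engel (θ xw) (θ yw) (k + 1) :=
      (h (k + 3)).trans (if_pos hk)
    have hs₂ : θ (sw 2) = fcomm (θ yw) (θ xw) := hs 0 hn
    refine ⟨hs₂, (h 2).trans (by rw [hs₂, generatorImage]), fun j hj hjn => ?_, fun k hk => ?_⟩
    · obtain ⟨k, rfl⟩ := Nat.exists_eq_add_of_le' hj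
      exact (hs (k + 1) (by lia)).trans (by rw [engel, ← hs k (by lia)]; rfl)
    · obtain ⟨k, rfl⟩ := Nat.exists_eq_add_of_le' (show 3 ≤ k by lia)
      exact (h (k + 3)).trans (if_neg (by lia))
  · rintro ⟨hs₂, ht, hs, hkill⟩
    have hengel (k : ℕ) (hk : k < n) : θ (sw (k + 2)) = engel (θ xw) (θ yw) (k + 1) := by
      induction k with
      | zero => exact hs₂
      | succ k ih => exact (hs (k + 3) (by lia) (by lia)).trans (by rw [engel, ← ih (by lia)]; rfl)
    rintro (_ | _ | _ | k)
    · rfl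
    · rfl
    · rw [generatorImage, ← hs₂, ← ht]
      rfl
    · rw [generatorImage]
      split_ifs with hk
      · exact hengel k hk
      · exact hkill (k + 3) (by lia)

lemma map_rels_eq_one_iff_gqRelations (hn : 3 ≤ n) {θ : FreeGroup ℕ →* G} :
    (∀ r ∈ rels (n + 1) (xRel (n + 1) a) (yRel (n + 1) b), θ r = 1) ↔
      (∀ k, θ (.of k) = generatorImage n (θ xw) (θ yw) k) ∧ GQRelations n a b (θ xw) (θ yw) := by
  rw [map_rels_eq_one_iff, ← forall_map_of_eq_generatorImage_iff (by lia)]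
  refine and_congr_right fun h => ?_
  have ht : θ t3w = fcomm (fcomm (θ yw) (θ xw)) (θ yw) := h 2
  have hs (k : ℕ) (hk : 1 ≤ k) (hkn : k ≤ n) : θ (sw (k + 1)) = engel (θ xw) (θ yw) k := by
    obtain ⟨k, rfl⟩ := Nat.exists_eq_add_of_le' hk
    exact (h (k + 3)).trans (if_pos hkn)
  have hengel_cube :
      (∀ j, 2 ≤ j → j ≤ n + 1 - 3 → θ (sw j) ^ 3 = θ (sw (j + 2)) ^ 2 * θ (sw (j + 3))) ↔
      ∀ k, 1 ≤ k → k + 3 ≤ n → engel (θ xw) (θ yw) k ^ 3 =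
        engel (θ xw) (θ yw) (k + 2) ^ 2 * engel (θ xw) (θ yw) (k + 3) := by
    refine ⟨fun h k hk hkn => ?_, fun h j hj hjn => ?_⟩
    · rw [← hs k hk (by lia), ← hs (k + 2) (by lia) (by lia), ← hs (k + 3) (by lia) hkn]
      exact h (k + 1) (by lia) (by lia)
    · obtain ⟨k, rfl⟩ := Nat.exists_eq_add_of_le' (Nat.one_le_of_lt hj)
      refine (congrArg (· ^ 3) (hs k (by lia) (by lia))).trans ((h k (by lia) (by lia)).trans ?_)
      rw [← hs (k + 2) (by lia) (by lia), ← hs (k + 3) (by lia) (by lia)]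
  have htop : θ (sw (n + 1 - 2)) = engel (θ xw) (θ yw) (n - 2) := by
    rw [← hs (n - 2) (by lia) (by lia)]
    congr 2
    lia
  have hx : θ (xRel (n + 1) a) = 1 ↔ θ xw ^ 3 = engel (θ xw) (θ yw) n ^ a := by
    rw [← hs n (by lia) le_rfl, xRel, map_mul, map_inv, map_pow, map_pow, mul_inv_eq_one]
  have hy : θ (yRel (n + 1) b) = 1 ↔ θ yw ^ 3 = engel (θ xw) (θ yw) n ^ b *
      engel (θ xw) (θ yw) 3 * engel (θ xw) (θ yw) 2 ^ 2 := by
    rw [← hs n (by lia) le_rfl, ← hs 3 (by lia) hn, ← hs 2 (by lia) (by lia), yRel]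
    simp only [map_mul, map_inv, map_pow, mul_inv_eq_iff_eq_mul, one_mul]
  rw [ht, hengel_cube, htop, hs n (by lia) le_rfl, hx, hy]
  exact ⟨fun ⟨h₁, h₂, h₃, h₄, h₅⟩ => ⟨h₁, h₂, h₃, h₄, h₅⟩,
    fun ⟨h₁, h₂, h₃, h₄, h₅⟩ => ⟨h₁, h₂, h₃, h₄, h₅⟩⟩

/-- The generator `x`. -/
def x : StdGQ n a b := PresentedGroup.of 0

/-- The generator `y`. -/
def y : StdGQ n a b := PresentedGroup.of 1

lemma of_eq_generatorImage (hn : 3 ≤ n) (k : ℕ) :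
    (PresentedGroup.of k : StdGQ n a b) = generatorImage n x y k :=
  ((map_rels_eq_one_iff_gqRelations hn).1 fun _ => PresentedGroup.one_of_mem).1 k

lemma gqRelations (hn : 3 ≤ n) : GQRelations n a b (x : StdGQ n a b) y :=
  ((map_rels_eq_one_iff_gqRelations hn).1 fun _ => PresentedGroup.one_of_mem).2

lemma map_generatorImage {H : Type*} [Group H] (f : G →* H) (u v : G) (k : ℕ) :
    f (generatorImage n u v k) = generatorImage n (f u) (f v) k := by
  rcases k with _ | _ | _ | k
  · rfl
  · rfl
  · simp only [generatorImage, map_fcomm]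
  · simp only [generatorImage, apply_ite f, map_engel, map_one]

lemma hom_ext (hn : 3 ≤ n) {f g : StdGQ n a b →* G} (hx : f x = g x) (hy : f y = g y) : f = g := by
  refine PresentedGroup.ext fun k => ?_
  rw [of_eq_generatorImage hn, map_generatorImage, map_generatorImage, hx, hy]

/-- The homomorphism out of `StdGQ n a b` given by a pair of elements satisfying its relations. -/
def lift (hn : 3 ≤ n) {u v : G} (h : GQRelations n a b u v) : StdGQ n a b →* G :=
  PresentedGroup.toGroup (f := generatorImage n u v) <| by
    have hx : FreeGroup.lift (generatorImage n u v) xw = u := FreeGroup.lift_apply_of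
    have hy : FreeGroup.lift (generatorImage n u v) yw = v := FreeGroup.lift_apply_of
    rw [map_rels_eq_one_iff_gqRelations hn, hx, hy]
    exact ⟨fun _ => FreeGroup.lift_apply_of, h⟩

lemma lift_x (hn : 3 ≤ n) {u v : G} (h : GQRelations n a b u v) : lift hn h x = u :=
  PresentedGroup.toGroup.of (rels := rels (n + 1) _ _) _

lemma lift_y (hn : 3 ≤ n) {u v : G} (h : GQRelations n a b u v) : lift hn h y = v :=
  PresentedGroup.toGroup.of (rels := rels (n + 1) _ _) _

end StdGQ

namespace StdGQ

open CyclicExtension EisensteinExt Multiplicative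

variable {n a b a' b' : ℕ}

/-- The quotient `C₃ ≀ C₃` of `StdGQ n a b`, whose base group contains the image of `x`. -/
noncomputable def toWreath (hn : 3 ≤ n) : StdGQ n a b →* Wreath :=
  lift hn (u := ofVec 1) (v := ⟨1, 0⟩) <|
    (Wreath.gqRelations_iff hn).2 (by simp [index_ofVec])

/-- The exponent of `y` in the abelianization `C₃ × C₃`. -/
noncomputable def yExponent (hn : 3 ≤ n) : StdGQ n a b →* Multiplicative (ZMod 3) :=
  indexHom.comp (toWreath hn)

lemma yExponent_x (hn : 3 ≤ n) : yExponent hn (x : StdGQ n a b) = ofAdd 0 :=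
  congrArg indexHom (lift_x hn _)

lemma yExponent_y (hn : 3 ≤ n) : yExponent hn (y : StdGQ n a b) = ofAdd 1 :=
  congrArg indexHom (lift_y hn _)

variable [NeZero n]

/-- The quotient of `StdGQ n a b` retaining `a` and `b`. -/
noncomputable def toEisensteinExt (hn : 3 ≤ n) : StdGQ n a b →* EisensteinExt n a b :=
  lift hn (u := ⟨1, 0⟩) (v := ofVec 1) <|
    (gqRelations_ofVec_iff hn (one_ne_zero (α := ZMod 3))).2 (by simp)

/-- The exponent of `x` in the abelianization `C₃ × C₃`. -/
noncomputable def xExponent (hn : 3 ≤ n) : StdGQ n a b →* Multiplicative (ZMod 3) :=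
  indexHom.comp (toEisensteinExt hn)

lemma xExponent_x (hn : 3 ≤ n) : xExponent hn (x : StdGQ n a b) = ofAdd 1 :=
  congrArg indexHom (lift_x hn _)

lemma xExponent_y (hn : 3 ≤ n) : xExponent hn (y : StdGQ n a b) = ofAdd 0 :=
  congrArg indexHom (lift_y hn _)

lemma residue_vec_toEisensteinExt (hn : 3 ≤ n) (u : StdGQ n a b) :
    residue (toEisensteinExt hn u).vec = (yExponent hn u).toAdd := by
  have hcomp : residueHom.comp (toEisensteinExt hn) = yExponent (a := a) (b := b) hn := by
    refine hom_ext hn ?_ ?_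
    · rw [MonoidHom.comp_apply, toEisensteinExt, lift_x, yExponent_x, residueHom_apply, map_zero]
    · rw [MonoidHom.comp_apply, toEisensteinExt, lift_y, yExponent_y, residueHom_apply,
        vec_ofVec, map_one]
  exact congrArg toAdd (DFunLike.congr_fun hcomp u)

lemma residue_vec_toWreath (hn : 3 ≤ n) (u : StdGQ n a b) :
    residue (toWreath hn u).vec = (xExponent hn u).toAdd := by
  have hcomp : residueHom.comp (toWreath hn) = xExponent (a := a) (b := b) hn := by
    refine hom_ext hn ?_ ?_
    · rw [MonoidHom.comp_apply, toWreath, lift_x, xExponent_x, residueHom_apply, vec_ofVec,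
        map_one]
    · rw [MonoidHom.comp_apply, toWreath, lift_y, xExponent_y, residueHom_apply, map_zero]
  exact congrArg toAdd (DFunLike.congr_fun hcomp u)

/-- The character `u ↦ p * xExponent u + q * yExponent u`. -/
noncomputable def character (hn : 3 ≤ n) (p q : ZMod 3) :
    StdGQ n a b →* Multiplicative (ZMod 3) :=
  xExponent hn ^ p.val * yExponent hn ^ q.val

lemma toAdd_character (hn : 3 ≤ n) (p q : ZMod 3) (u : StdGQ n a b) :
    (character hn p q u).toAdd = p * (xExponent hn u).toAdd + q * (yExponent hn u).toAdd := by
  simp [character]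

lemma eq_zero_of_character_eq_one (hn : 3 ≤ n) {p q : ZMod 3}
    (h : (character hn p q : StdGQ n a b →* _) = 1) : p = 0 ∧ q = 0 := by
  have hzero (u : StdGQ n a b) : p * (xExponent hn u).toAdd + q * (yExponent hn u).toAdd = 0 := by
    rw [← toAdd_character, h, MonoidHom.one_apply, toAdd_one]
  constructor
  · simpa [xExponent_x, yExponent_x] using hzero x
  · simpa [xExponent_y, yExponent_y] using hzero y

lemma exponents_det_ne_zero (hn : 3 ≤ n) {F : StdGQ n a b →* StdGQ n a' b'}
    (hF : Function.Surjective F) :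
    (xExponent hn (F x)).toAdd * (yExponent hn (F y)).toAdd ≠
      (yExponent hn (F x)).toAdd * (xExponent hn (F y)).toAdd := by
  intro hdet
  obtain ⟨v, hv, hzero⟩ := Matrix.exists_mulVec_eq_zero_iff.2
    ((Matrix.det_fin_two_of _ _ _ _).trans (sub_eq_zero.2 hdet))
  have hx : v 0 * (xExponent hn (F x)).toAdd + v 1 * (yExponent hn (F x)).toAdd = 0 := by
    simpa [Matrix.mulVec_eq_sum, mul_comm] using congrFun hzero 0
  have hy : v 0 * (xExponent hn (F y)).toAdd + v 1 * (yExponent hn (F y)).toAdd = 0 := by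
    simpa [Matrix.mulVec_eq_sum, mul_comm] using congrFun hzero 1
  have hker : (character hn (v 0) (v 1)).comp F = MonoidHom.comp 1 F :=
    hom_ext hn ((toAdd_character ..).trans hx) ((toAdd_character ..).trans hy)
  obtain ⟨h₀, h₁⟩ := eq_zero_of_character_eq_one hn ((MonoidHom.cancel_right hF).1 hker)
  exact hv (funext (Fin.forall_fin_two.2 ⟨h₀, h₁⟩))

theorem exists_exponents_of_surjective (hn : 3 ≤ n) {F : StdGQ n a b →* StdGQ n a' b'}
    (hF : Function.Surjective F) :
    ∃ i w : ZMod 3, i ≠ 0 ∧ w ≠ 0 ∧ a' * i = a * (i ^ n * w) ∧ b' * w = b * (i ^ n * w) := by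
  have hdet := exponents_det_ne_zero hn hF
  have hrel := (gqRelations hn).map F
  have hwreath : (yExponent hn (F x)).toAdd = 0 ∧ (xExponent hn (F y)).toAdd = 0 := by
    rw [← residue_vec_toWreath hn, ← residue_vec_toWreath hn] at hdet
    rw [← residue_vec_toWreath hn]
    exact Wreath.index_eq_zero_and_residue_eq_zero hn (hrel.map (toWreath hn)) hdet
  rw [hwreath.1, hwreath.2, mul_zero, mul_ne_zero_iff] at hdet
  have hy : ofVec (toEisensteinExt hn (F y)).vec = toEisensteinExt hn (F y) := ofVec_vec hwreath.2
  have hrel_ext := hrel.map (toEisensteinExt hn)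
  rw [← hy, gqRelations_ofVec_iff hn hdet.1, residue_vec_toEisensteinExt,
    residue_vec_toEisensteinExt, hwreath.1, mul_zero, zero_add] at hrel_ext
  exact ⟨_, _, hdet.1, hdet.2, hrel_ext⟩

theorem exponents_eq_of_surjective (hn : 3 ≤ n) (heven : Even n)
    (ha : a < 2) (hb : b < 3) (ha' : a' < 2) (hb' : b' < 3)
    {F : StdGQ n a b →* StdGQ n a' b'} (hF : Function.Surjective F) : a = a' ∧ b = b' := by
  obtain ⟨i, w, hi, hw, hrel_a, hrel_b⟩ := exists_exponents_of_surjective hn hF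
  have hpow : i ^ n = 1 := by
    obtain ⟨k, rfl⟩ := heven
    have hsq : i ^ 2 = 1 := ZMod.pow_card_sub_one_eq_one hi
    rw [← two_mul, pow_mul, hsq, one_pow]
  rw [hpow, one_mul] at hrel_a hrel_b
  constructor
  · interval_cases a <;> interval_cases a' <;> simp_all
  · rw [← Nat.mod_eq_of_lt hb, ← Nat.mod_eq_of_lt hb']
    exact ((ZMod.natCast_eq_natCast_iff' _ _ _).1 (mul_right_cancel₀ hw hrel_b)).symm

end StdGQ

theorem GQ_pairwise_nonisomorphic_of_odd_general (c : ℕ) (hc : 5 ≤ c) (hodd : Odd c) :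
    ∀ Rx ∈ RxSet c, ∀ Ry ∈ RySet c, ∀ Rx' ∈ RxSet c, ∀ Ry' ∈ RySet c,
      (Rx, Ry) ≠ (Rx', Ry') → ∀ F : GQ c Rx Ry →* GQ c Rx' Ry', ¬ Function.Surjective F := by
  intro Rx hRx Ry hRy Rx' hRx' Ry' hRy' hne F hF
  obtain ⟨a, ha, rfl⟩ := exists_eq_xRel_of_mem_RxSet hRx
  obtain ⟨b, hb, rfl⟩ := exists_eq_yRel_of_mem_RySet hRy
  obtain ⟨a', ha', rfl⟩ := exists_eq_xRel_of_mem_RxSet hRx'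
  obtain ⟨b', hb', rfl⟩ := exists_eq_yRel_of_mem_RySet hRy'
  obtain ⟨n, rfl⟩ := Nat.exists_eq_add_of_le' (Nat.one_le_of_lt hc)
  have : NeZero n := ⟨by lia⟩
  obtain ⟨rfl, rfl⟩ := StdGQ.exponents_eq_of_surjective (by lia)
    (Nat.not_odd_iff_even.1 (Nat.odd_add_one.1 hodd)) ha hb ha' hb' hF
  exact hne rfl

theorem GQ_pairwise_nonisomorphic_of_odd (c : ℕ) (hc : 5 ≤ c) (hodd : Odd c) :
    ∀ Rx ∈ RxSet c, ∀ Ry ∈ RySet c, ∀ Rx' ∈ RxSet c, ∀ Ry' ∈ RySet c,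
      (Rx, Ry) ≠ (Rx', Ry') →
        IsEmpty (GQ c Rx Ry ≃* GQ c Rx' Ry') :=
  fun Rx hRx Ry hRy Rx' hRx' Ry' hRy' hne => ⟨fun φ =>
    GQ_pairwise_nonisomorphic_of_odd_general c hc hodd Rx hRx Ry hRy Rx' hRx' Ry' hRy' hne
      φ.toMonoidHom φ.surjective⟩
end
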